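/- Let L ≥ 2, α ∈ {x, z}, and 1 ≤ j < j+r ≤ L. The Kennedy–Tasaki transformation maps the string-order operator to a ferromagnetic two-point operator: U_KT ( −S^α_j · exp(iπ Σ_{k=j+1}^{j+r−1} S^α_k) · S^α_{j+r} ) U_KT = S^α_j S^α_{j+r}. -/

import Mathlib

noncomputable section
open Complex Matrix

/-- The Hilbert space operators of the `L`-site spin-1 chain: matrices on `(ℂ³)^{⊗L}`,
with the tensor factors indexed by sites and the single-site ordered basis `(|+⟩,|0⟩,|−⟩)`. -/
abbrev Op (L : ℕ) : Type := Matrix (Fin L → Fin 3) (Fin L → Fin 3) ℂ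

/-- The spin-1 matrix `Sˣ`. -/
def Sx : Matrix (Fin 3) (Fin 3) ℂ :=
  ((Real.sqrt 2 : ℝ) : ℂ)⁻¹ • !![0, 1, 0; 1, 0, 1; 0, 1, 0]

/-- The spin-1 matrix `Sʸ`. -/
def Sy : Matrix (Fin 3) (Fin 3) ℂ :=
  ((Real.sqrt 2 : ℝ) : ℂ)⁻¹ • !![0, -I, 0; I, 0, -I; 0, I, 0]

/-- The spin-1 matrix `Sᶻ = diag(1,0,−1)`. -/
def Sz : Matrix (Fin 3) (Fin 3) ℂ := !![1, 0, 0; 0, 0, 0; 0, 0, -1]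

/-- `site A j` is the one-site operator `A` acting on site `j` and identity elsewhere. -/
def site {L : ℕ} (A : Matrix (Fin 3) (Fin 3) ℂ) (j : Fin L) : Op L :=
  Matrix.of fun f g => ∏ k : Fin L, if k = j then A (f k) (g k) else (if f k = g k then 1 else 0)

/-- One factor `exp(iπ Sᶻ_u Sˣ_v)` of the Kennedy–Tasaki transformation. -/
def ktFactor {L : ℕ} (u v : Fin L) : Op L :=
  NormedSpace.exp (((Real.pi : ℂ) * I) • (site Sz u * site Sx v))

/-- The Kennedy–Tasaki transformation `U_KT = ∏_{1 ≤ u < v ≤ L} exp(iπ Sᶻ_u Sˣ_v)`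
(the factors pairwise commute, so the ordering is immaterial). -/
def UKT (L : ℕ) : Op L :=
  ((List.finRange L).map fun u =>
    ((List.finRange L).map fun v => if u < v then ktFactor u v else 1).prod).prod

/-- The p-wave basis vector `|↑⟩ = (|+⟩ − |−⟩)/√2`. -/
def up : Fin 3 → ℂ := ![((Real.sqrt 2 : ℝ) : ℂ)⁻¹, 0, -((Real.sqrt 2 : ℝ) : ℂ)⁻¹]

/-- The p-wave basis vector `|↓⟩ = |0⟩`. -/
def down : Fin 3 → ℂ := ![0, 1, 0]

/-- The p-wave basis vector `|h⟩ = (|+⟩ + |−⟩)/√2`. -/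
def hole : Fin 3 → ℂ := ![((Real.sqrt 2 : ℝ) : ℂ)⁻¹, 0, ((Real.sqrt 2 : ℝ) : ℂ)⁻¹]

/-- The rank-one operator `|a⟩⟨b|`. -/
def ketbra (a b : Fin 3 → ℂ) : Matrix (Fin 3) (Fin 3) ℂ := Matrix.vecMulVec a (star b)

/-- `σˣ = |↑⟩⟨↓| + |↓⟩⟨↑|` (annihilating `|h⟩`). -/
def sigx : Matrix (Fin 3) (Fin 3) ℂ := ketbra up down + ketbra down up

/-- `σʸ = −i|↑⟩⟨↓| + i|↓⟩⟨↑|` (annihilating `|h⟩`). -/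
def sigy : Matrix (Fin 3) (Fin 3) ℂ := (-I) • ketbra up down + I • ketbra down up

/-- `σᶻ = |↑⟩⟨↑| − |↓⟩⟨↓|` (annihilating `|h⟩`). -/
def sigz : Matrix (Fin 3) (Fin 3) ℂ := ketbra up up - ketbra down down

/-- `n = |↑⟩⟨↑| + |↓⟩⟨↓|` (annihilating `|h⟩`). -/
def nMat : Matrix (Fin 3) (Fin 3) ℂ := ketbra up up + ketbra down down

/-- `h = |h⟩⟨h|`. -/
def hMat : Matrix (Fin 3) (Fin 3) ℂ := ketbra hole hole

/-- `P = ⊗_{j=1}^L n_j`, the orthogonal projection onto the hole-free subspace. -/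
def Pproj (L : ℕ) : Op L := Matrix.of fun f g => ∏ k : Fin L, nMat (f k) (g k)

/-- The Heisenberg coupling `S_j · S_k`. -/
def heis {L : ℕ} (j k : Fin L) : Op L :=
  site Sx j * site Sx k + site Sy j * site Sy k + site Sz j * site Sz k

/-- The bilinear-biquadratic Hamiltonian
`H_BLBQ(θ) = Σ_{j=1}^{L−1} [cosθ (S_j·S_{j+1}) + sinθ (S_j·S_{j+1})²]`. -/
def HBLBQ (L : ℕ) (θ : ℝ) : Op L :=
  ∑ j : Fin L, if h : (j : ℕ) + 1 < L then
    ((Real.cos θ : ℝ) : ℂ) • heis j ⟨(j : ℕ) + 1, h⟩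
      + ((Real.sin θ : ℝ) : ℂ) • (heis j ⟨(j : ℕ) + 1, h⟩) ^ 2
  else 0

/-- The self-dual Hamiltonian `H_SD(θ) = H_BLBQ(θ) + U_KT H_BLBQ(θ) U_KT`. -/
def HSD (L : ℕ) (θ : ℝ) : Op L := HBLBQ L θ + UKT L * HBLBQ L θ * UKT L

/-- The spin-1/2 XXZ Hamiltonian written in the p-wave basis:
`H_XXZ(θ) = (cosθ−sinθ) Σ_j (−σˣ_jσˣ_{j+1} + σʸ_jσʸ_{j+1}) + sinθ Σ_j σᶻ_jσᶻ_{j+1}`. -/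
def HXXZ (L : ℕ) (θ : ℝ) : Op L :=
  ((Real.cos θ - Real.sin θ : ℝ) : ℂ) •
    (∑ j : Fin L, if h : (j : ℕ) + 1 < L then
      -(site sigx j * site sigx ⟨(j : ℕ) + 1, h⟩) + site sigy j * site sigy ⟨(j : ℕ) + 1, h⟩
    else 0)
  + ((Real.sin θ : ℝ) : ℂ) •
    (∑ j : Fin L, if h : (j : ℕ) + 1 < L then
      site sigz j * site sigz ⟨(j : ℕ) + 1, h⟩
    else 0)

/-- The global product `∏_{j=1}^L exp(c • A_j)` of commuting single-site exponentials. -/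
def globalProd (L : ℕ) (A : Matrix (Fin 3) (Fin 3) ℂ) (c : ℂ) : Op L :=
  ((List.finRange L).map fun j => NormedSpace.exp (c • site A j)).prod

/-- The symmetry flux `F^y_j = exp(−iπ Σ_{k<j} Sʸ_k) · Sʸ_j`. -/
def fluxY (L : ℕ) (j : Fin L) : Op L :=
  NormedSpace.exp ((-((Real.pi : ℂ) * I)) •
    ∑ k : Fin L, if (k : ℕ) < (j : ℕ) then site Sy k else 0) * site Sy j

/-!
Since `(Sˣ)³ = Sˣ` and `(Sᶻ)³ = Sᶻ`, all exponentials involved are of the form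
`exp (iπA) = 1 - 2A²`. For spin `1` the matrices `(Sˣ)²` and `(Sᶻ)²` commute, so `U_KT` is a product
of commuting involutions, and it commutes with every string `∏_{k ∈ s} exp (iπ S^α_k)`. The relation
`(Sᶻ)²Sˣ + Sˣ(Sᶻ)² = Sˣ`, and the same with `x` and `z` exchanged, give
`U_KT Sˣ_j U_KT = Sˣ_j ∏_{v > j} exp (iπ Sˣ_v)` and `U_KT Sᶻ_j U_KT = Sᶻ_j ∏_{u < j} exp (iπ Sᶻ_u)`.
Strings multiply by symmetric difference of their supports. For `j < k` the supports of the two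
strings so created and of the string between `j` and `k` have symmetric difference `{k}` for `x` and
`{j}` for `z`, and on the remaining site `S^α exp (iπ S^α) = -S^α` cancels the sign.
-/

open scoped symmDiff

section PiRotation

variable {R : Type*} [Ring R]

/-- The rotation by the angle `π` generated by an element `A` with `A ^ 3 = A`: a polynomial
expression for `exp (iπA)` that makes sense in every ring. -/
def piRotation (A : R) : R := 1 - 2 * A ^ 2

theorem map_piRotation {S : Type*} [Ring S] (f : R →+* S) (A : R) :
    f (piRotation A) = piRotation (f A) := by
  simp only [piRotation, map_sub, map_one, map_mul, map_ofNat, map_pow]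

theorem piRotation_mem {K : Subring R} {A : R} (hA : A ^ 2 ∈ K) : piRotation A ∈ K :=
  sub_mem (one_mem K) (mul_mem (ofNat_mem K 2) hA)

theorem commute_piRotation_left {A B : R} (h : Commute (A ^ 2) B) : Commute (piRotation A) B :=
  (Commute.one_left B).sub_left ((Commute.ofNat_left 2 B).mul_left h)

theorem mul_piRotation {A : R} (hA : A ^ 3 = A) : A * piRotation A = -A := by
  have h : A * (2 * A ^ 2) = 2 * A ^ 3 := by noncomm_ring
  rw [piRotation, mul_sub, h, hA]
  noncomm_ring

theorem piRotation_mul_self {A : R} (hA : A ^ 3 = A) : piRotation A * piRotation A = 1 := by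
  have h : A ^ 4 = A ^ 2 := by rw [pow_succ, hA, sq]
  calc piRotation A * piRotation A = 1 - 4 * A ^ 2 + 4 * A ^ 4 := by
        rw [piRotation]; noncomm_ring
    _ = 1 := by rw [h]; noncomm_ring

theorem semiconjBy_piRotation_mul {S T X : R} (hST : Commute S T) (hT : T ^ 3 = T)
    (hTX : Commute T X) (hSX : S ^ 2 * X + X * S ^ 2 = X) :
    SemiconjBy (piRotation (S * T)) X (X * piRotation T) := by
  have hT4 : T ^ 2 * T ^ 2 = T ^ 2 := by rw [← pow_add, pow_succ, hT, sq]
  have hTS : T ^ 2 * S ^ 2 = S ^ 2 * T ^ 2 := (hST.pow_pow 2 2).eq.symm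
  have hTX2 : T ^ 2 * X = X * T ^ 2 := (hTX.pow_left 2).eq
  have hSX' : S ^ 2 * X = X - X * S ^ 2 := eq_sub_of_add_eq hSX
  have hSTX : S ^ 2 * T ^ 2 * X = X * T ^ 2 - X * (S ^ 2 * T ^ 2) := by
    rw [mul_assoc, hTX2, ← mul_assoc, hSX', sub_mul, mul_assoc X]
  have hTST : T ^ 2 * (S ^ 2 * T ^ 2) = S ^ 2 * T ^ 2 := by
    rw [← mul_assoc, hTS, mul_assoc, hT4]
  calc piRotation (S * T) * X = X - 2 * (S ^ 2 * T ^ 2 * X) := by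
        rw [piRotation, hST.mul_pow]; noncomm_ring
    _ = X * (1 - 2 * T ^ 2 - 2 * (S ^ 2 * T ^ 2) + 4 * (T ^ 2 * (S ^ 2 * T ^ 2))) := by
        rw [hSTX, hTST]; noncomm_ring
    _ = X * piRotation T * piRotation (S * T) := by
        rw [piRotation, piRotation, hST.mul_pow]; noncomm_ring

variable [TopologicalSpace R] [IsTopologicalRing R] [T2Space R] [Algebra ℂ R] [ContinuousSMul ℂ R]

theorem exp_smul_of_pow_three_eq_self {A : R} (hA : A ^ 3 = A) (t : ℂ) :
    NormedSpace.exp (t • A) = 1 + sinh t • A + (cosh t - 1) • A ^ 2 := by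
  have hodd (n : ℕ) : A ^ (2 * n + 1) = A := by
    induction n with
    | zero => simp
    | succ n ih => rw [show 2 * (n + 1) + 1 = 2 * n + 1 + 2 by ring, pow_add, ih, ← pow_succ', hA]
  have heven (n : ℕ) : A ^ (2 * n) = A ^ 2 + if n = 0 then 1 - A ^ 2 else 0 := by
    rcases n with _ | n
    · simp
    · rw [show 2 * (n + 1) = 2 * n + 1 + 1 by ring, pow_succ, hodd, sq]
      simp
  have hsum_even : HasSum (fun n ↦ ((2 * n).factorial⁻¹ : ℂ) • (t • A) ^ (2 * n))
      (cosh t • A ^ 2 + (1 - A ^ 2)) := by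
    convert ((Complex.hasSum_cosh t).smul_const (A ^ 2)).add (hasSum_ite_eq 0 (1 - A ^ 2)) using 2
      with n
    rw [smul_pow, heven, smul_smul, smul_add, div_eq_inv_mul]
    rcases n with _ | n <;> simp
  have hsum_odd : HasSum (fun n ↦ ((2 * n + 1).factorial⁻¹ : ℂ) • (t • A) ^ (2 * n + 1))
      (sinh t • A) := by
    convert (Complex.hasSum_sinh t).smul_const A using 2 with n
    rw [smul_pow, hodd, smul_smul, div_eq_inv_mul]
  have hsum : HasSum (fun n : ℕ ↦ (n.factorial⁻¹ : ℂ) • (t • A) ^ n)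
      (cosh t • A ^ 2 + (1 - A ^ 2) + sinh t • A) := HasSum.even_add_odd hsum_even hsum_odd
  rw [NormedSpace.exp_eq_tsum ℂ]
  refine hsum.tsum_eq.trans ?_
  module

theorem exp_pi_mul_I_smul_of_pow_three_eq_self {A : R} (hA : A ^ 3 = A) :
    NormedSpace.exp (((Real.pi : ℂ) * I) • A) = piRotation A := by
  rw [exp_smul_of_pow_three_eq_self hA, Complex.sinh_mul_I, Complex.cosh_mul_I, Complex.sin_pi,
    Complex.cos_pi, piRotation, two_mul]
  module

end PiRotation

section ListProd

variable {M ι : Type*} [Monoid M]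

theorem prod_map_finRange_eq_single {L : ℕ} {f : Fin L → M} (j : Fin L)
    (hf : ∀ i, i ≠ j → f i = 1) : ((List.finRange L).map f).prod = f j := by
  rw [List.prod_map_eq_pow_single j f fun i hi _ ↦ hf i hi,
    List.count_eq_one_of_mem (List.nodup_finRange L) (List.mem_finRange j), pow_one]

theorem prod_map_mem {S : Type*} [SetLike S M] [SubmonoidClass S M] {s : S}
    (l : List ι) {f : ι → M} (hf : ∀ i, f i ∈ s) : (l.map f).prod ∈ s :=
  list_prod_mem <| List.forall_mem_map.2 fun i _ ↦ hf i

theorem semiconjBy_prod_map (l : List ι) {f g : ι → M} {X : M}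
    (hfg : ∀ i k, Commute (f i) (g k)) (hX : ∀ i, SemiconjBy (f i) X (X * g i)) :
    SemiconjBy (l.map f).prod X (X * (l.map g).prod) := by
  induction l with
  | nil => simp
  | cons i l ih =>
    have hcomm : Commute (f i) (l.map g).prod :=
      Commute.list_prod_right _ _ <| List.forall_mem_map.2 fun k _ ↦ hfg i k
    rw [List.map_cons, List.map_cons, List.prod_cons, List.prod_cons, ← mul_assoc]
    exact ((hX i).mul_right hcomm).mul_left ih

theorem prod_map_mul_self_eq_one (l : List ι) {f : ι → M} (hcomm : ∀ i k, Commute (f i) (f k))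
    (hf : ∀ i, f i * f i = 1) : (l.map f).prod * (l.map f).prod = 1 := by
  induction l with
  | nil => simp
  | cons i l ih =>
    have hl : Commute (l.map f).prod (f i) :=
      Commute.list_prod_left _ _ <| List.forall_mem_map.2 fun k _ ↦ hcomm k i
    rw [List.map_cons, List.prod_cons, hl.mul_mul_mul_comm, hf, ih, one_mul]

end ListProd

section Intervals

variable {α : Type*} [LinearOrder α] [LocallyFiniteOrder α] {j k : α}

theorem Ioi_symmDiff_Ioo_symmDiff_Ioi [LocallyFiniteOrderTop α] (hjk : j < k) :
    Finset.Ioi j ∆ Finset.Ioo j k ∆ Finset.Ioi k = {k} := by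
  ext i
  simp only [Finset.mem_symmDiff, Finset.mem_Ioi, Finset.mem_Ioo, Finset.mem_singleton]
  grind

theorem Iio_symmDiff_Ioo_symmDiff_Iio [LocallyFiniteOrderBot α] (hjk : j < k) :
    Finset.Iio j ∆ Finset.Ioo j k ∆ Finset.Iio k = {j} := by
  ext i
  simp only [Finset.mem_symmDiff, Finset.mem_Iio, Finset.mem_Ioo, Finset.mem_singleton]
  grind

end Intervals

section Sites

/-- The Kronecker product `⨂ₖ Aₖ` of a finite family of square matrices, as a monoid
homomorphism; its rows and columns are indexed by configurations `ι → n`. -/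
def piKronecker {ι n R : Type*} [Fintype ι] [DecidableEq ι] [Fintype n] [DecidableEq n]
    [CommSemiring R] : (ι → Matrix n n R) →* Matrix (ι → n) (ι → n) R where
  toFun A := Matrix.of fun f g ↦ ∏ k, A k (f k) (g k)
  map_one' := by
    ext f g
    simp [Matrix.one_apply, Fintype.prod_ite_zero, funext_iff]
  map_mul' A B := by
    ext f g
    simp [Matrix.mul_apply, Finset.prod_univ_sum, Fintype.piFinset_univ, Finset.prod_mul_distrib]

theorem piKronecker_apply {ι n R : Type*} [Fintype ι] [DecidableEq ι] [Fintype n] [DecidableEq n]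
    [CommSemiring R] (A : ι → Matrix n n R) (f g : ι → n) :
    piKronecker A f g = ∏ k, A k (f k) (g k) :=
  rfl

variable {L : ℕ}

theorem site_eq_piKronecker (A : Matrix (Fin 3) (Fin 3) ℂ) (j : Fin L) :
    site A j = piKronecker (Pi.mulSingle j A) := by
  ext f g
  rw [piKronecker_apply, site, Matrix.of_apply]
  refine Finset.prod_congr rfl fun k _ ↦ ?_
  obtain rfl | hk := eq_or_ne k j
  · simp
  · simp [hk, Matrix.one_apply]

theorem site_apply (A : Matrix (Fin 3) (Fin 3) ℂ) (j : Fin L) (f g : Fin L → Fin 3) :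
    site A j f g = A (f j) (g j) * ∏ k ∈ {j}ᶜ, if f k = g k then 1 else 0 := by
  rw [site, Matrix.of_apply, Fintype.prod_eq_mul_prod_compl j, if_pos rfl]
  congr 1
  exact Finset.prod_congr rfl fun k hk ↦ if_neg (by simpa using hk)

/-- `site · j` as a ring homomorphism. -/
def siteHom (j : Fin L) : Matrix (Fin 3) (Fin 3) ℂ →+* Op L where
  toFun A := site A j
  map_one' := by rw [site_eq_piKronecker, Pi.mulSingle_one, map_one]
  map_mul' A B := by simp only [site_eq_piKronecker, Pi.mulSingle_mul, map_mul]
  map_zero' := by ext f g; simp [site_apply]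
  map_add' A B := by ext f g; simp [site_apply, add_mul]

theorem site_pow (A : Matrix (Fin 3) (Fin 3) ℂ) (n : ℕ) (j : Fin L) :
    site (A ^ n) j = site A j ^ n :=
  map_pow (siteHom j) A n

theorem site_piRotation (A : Matrix (Fin 3) (Fin 3) ℂ) (j : Fin L) :
    site (piRotation A) j = piRotation (site A j) :=
  map_piRotation (siteHom j) A

theorem commute_site_site_of_ne (A B : Matrix (Fin 3) (Fin 3) ℂ) {i j : Fin L} (h : i ≠ j) :
    Commute (site A i) (site B j) := by
  rw [site_eq_piKronecker, site_eq_piKronecker]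
  exact (Pi.mulSingle_commute h A B).map piKronecker

theorem commute_site_site {A B : Matrix (Fin 3) (Fin 3) ℂ} (h : Commute A B) (i j : Fin L) :
    Commute (site A i) (site B j) := by
  obtain rfl | hij := eq_or_ne i j
  · exact h.map (siteHom i)
  · exact commute_site_site_of_ne A B hij

theorem site_mul_site_pow_three {A B : Matrix (Fin 3) (Fin 3) ℂ} (hA : A ^ 3 = A) (hB : B ^ 3 = B)
    {u v : Fin L} (huv : u ≠ v) : (site A u * site B v) ^ 3 = site A u * site B v := by
  rw [(commute_site_site_of_ne A B huv).mul_pow, ← site_pow, ← site_pow, hA, hB]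

theorem prod_map_site_finRange (A : Fin L → Matrix (Fin 3) (Fin 3) ℂ) :
    ((List.finRange L).map fun k ↦ site (A k) k).prod = piKronecker A := by
  have hprod : ((List.finRange L).map fun k ↦ Pi.mulSingle k (A k)).prod = A := by
    ext1 i
    rw [Pi.list_prod_apply, List.map_map, prod_map_finRange_eq_single i]
    · simp
    · intro k hk
      simp [hk.symm]
  conv_rhs => rw [← hprod, map_list_prod, List.map_map]
  simp only [site_eq_piKronecker, Function.comp_def]

end Sites

section RotationString

variable {L : ℕ} {A : Matrix (Fin 3) (Fin 3) ℂ}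

/-- The string operator `∏_{k ∈ s} exp (iπ A_k)`, for a one-site matrix with `A ^ 3 = A`. -/
def rotationString (A : Matrix (Fin 3) (Fin 3) ℂ) (s : Finset (Fin L)) : Op L :=
  piKronecker fun k ↦ if k ∈ s then piRotation A else 1

theorem rotationString_empty : rotationString A (∅ : Finset (Fin L)) = 1 := by
  rw [rotationString, ← map_one piKronecker]
  simp [Pi.one_def]

theorem rotationString_singleton (i : Fin L) :
    rotationString A {i} = piRotation (site A i) := by
  rw [← site_piRotation, site_eq_piKronecker, rotationString]
  refine congrArg piKronecker (funext fun k ↦ ?_)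
  simp [Pi.mulSingle_apply]

theorem rotationString_mul (hA : A ^ 3 = A) (s t : Finset (Fin L)) :
    rotationString A s * rotationString A t = rotationString A (s ∆ t) := by
  rw [rotationString, rotationString, ← map_mul, rotationString]
  refine congrArg piKronecker (funext fun k ↦ ?_)
  by_cases hs : k ∈ s <;> by_cases ht : k ∈ t <;>
    simp [hs, ht, Finset.mem_symmDiff, piRotation_mul_self hA]

theorem prod_map_ite_site_piRotation (A : Matrix (Fin 3) (Fin 3) ℂ) (s : Finset (Fin L)) :
    ((List.finRange L).map fun k ↦ if k ∈ s then site (piRotation A) k else 1).prod =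
      rotationString A s := by
  rw [rotationString, ← prod_map_site_finRange]
  refine congrArg List.prod (List.map_congr_left fun k _ ↦ ?_)
  split_ifs
  · rfl
  · exact (map_one (siteHom k)).symm

theorem commute_rotationString_site (s : Finset (Fin L)) (j : Fin L) :
    Commute (rotationString A s) (site A j) := by
  have h : Commute (piRotation A) A := commute_piRotation_left (Commute.pow_self A 2)
  rw [← prod_map_ite_site_piRotation]
  refine Commute.list_prod_left _ _ <| List.forall_mem_map.2 fun k _ ↦ ?_
  split_ifs
  · exact commute_site_site h k j
  · exact Commute.one_left _

theorem exp_sum_site (hA : A ^ 3 = A) (s : Finset (Fin L)) :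
    NormedSpace.exp (((Real.pi : ℂ) * I) • ∑ k ∈ s, site A k) = rotationString A s := by
  induction s using Finset.induction_on with
  | empty => rw [Finset.sum_empty, smul_zero, NormedSpace.exp_zero, rotationString_empty]
  | insert i s hi ih =>
    have hcomm : Commute (site A i) (∑ k ∈ s, site A k) :=
      Commute.sum_right _ _ _ fun k _ ↦ commute_site_site (Commute.refl A) i k
    have hsite : site A i ^ 3 = site A i := by rw [← site_pow, hA]
    rw [Finset.sum_insert hi, smul_add,
      Matrix.exp_add_of_commute _ _ ((hcomm.smul_right _).smul_left _), ih,
      exp_pi_mul_I_smul_of_pow_three_eq_self hsite, ← rotationString_singleton,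
      rotationString_mul hA, Finset.symmDiff_eq_union (Finset.disjoint_singleton_left.2 hi),
      Finset.insert_eq]

theorem semiconjBy_neg_site_mul_rotationString_mul_site (hA : A ^ 3 = A) {U : Op L}
    {s t w : Finset (Fin L)} {i j k : Fin L} (hi : i = j ∨ i = k) (hstw : s ∆ t ∆ w = {i})
    (hj : SemiconjBy U (site A j) (site A j * rotationString A s))
    (ht : Commute U (rotationString A t))
    (hk : SemiconjBy U (site A k) (site A k * rotationString A w)) :
    SemiconjBy U (-(site A j * rotationString A t * site A k)) (site A j * site A k) := by
  have habsorb : site A j * site A k * piRotation (site A i) = -(site A j * site A k) := by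
    have hsite : site A i ^ 3 = site A i := by rw [← site_pow, hA]
    have hjk : Commute (site A j) (site A k) := commute_site_site (Commute.refl A) j k
    rcases hi with rfl | rfl
    · rw [hjk.eq, mul_assoc, mul_piRotation hsite, mul_neg]
    · rw [mul_assoc, mul_piRotation hsite, mul_neg]
  suffices h : site A j * site A k = -(site A j * rotationString A s * rotationString A t *
      (site A k * rotationString A w)) from h ▸ ((hj.mul_right ht).mul_right hk).neg_right
  calc site A j * site A k = -(site A j * site A k * rotationString A (s ∆ t ∆ w)) := by
        rw [hstw, rotationString_singleton, habsorb, neg_neg]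
    _ = -(site A j * (site A k * (rotationString A s * rotationString A t)) *
          rotationString A w) := by
        simp only [← rotationString_mul hA, mul_assoc]
    _ = -(site A j * rotationString A s * rotationString A t *
          (site A k * rotationString A w)) := by
        rw [← ((commute_rotationString_site s k).mul_left (commute_rotationString_site t k)).eq]
        simp only [mul_assoc]

end RotationString

section SpinMatrices

theorem Sx_sq : Sx ^ 2 = !![1/2, 0, 1/2; 0, 1, 0; 1/2, 0, 1/2] := by
  have hsqrt : ((Real.sqrt 2 : ℝ) : ℂ)⁻¹ ^ 2 = 1 / 2 := by
    rw [inv_pow, ← ofReal_pow, Real.sq_sqrt zero_le_two, ofReal_ofNat, one_div]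
  rw [Sx, smul_pow, hsqrt, sq]
  ext i j
  fin_cases i <;> fin_cases j <;> norm_num

theorem Sz_sq : Sz ^ 2 = !![1, 0, 0; 0, 0, 0; 0, 0, 1] := by
  rw [Sz, sq]
  ext i j
  fin_cases i <;> fin_cases j <;> simp

theorem Sx_pow_three : Sx ^ 3 = Sx := by
  rw [pow_succ, Sx_sq, Sx]
  ext i j
  fin_cases i <;> fin_cases j <;> simp <;> ring

theorem Sz_pow_three : Sz ^ 3 = Sz := by
  rw [pow_succ, Sz_sq, Sz]
  ext i j
  fin_cases i <;> fin_cases j <;> simp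

theorem commute_Sx_sq_Sz_sq : Commute (Sx ^ 2) (Sz ^ 2) := by
  rw [commute_iff_eq, Sx_sq, Sz_sq]
  simp

theorem Sz_sq_mul_Sx_add_Sx_mul_Sz_sq : Sz ^ 2 * Sx + Sx * Sz ^ 2 = Sx := by
  rw [Sz_sq, Sx]
  simp

theorem Sx_sq_mul_Sz_add_Sz_mul_Sx_sq : Sx ^ 2 * Sz + Sz * Sx ^ 2 = Sz := by
  rw [Sx_sq, Sz]
  ext i j
  fin_cases i <;> fin_cases j <;> simp <;> norm_num

end SpinMatrices

section KennedyTasaki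

variable {L : ℕ}

/-- The ring generated by the operators `(Sˣ_k)²` and `(Sᶻ_k)²`. For spin `1` these squares commute
even on the same site, so this is a commutative ring; it contains `U_KT` and all its factors. -/
def spinSquareSubring (L : ℕ) : Subring (Op L) :=
  Subring.closure (Set.range (site (Sx ^ 2)) ∪ Set.range (site (Sz ^ 2)))

theorem commute_of_mem_spinSquareSubring {M N : Op L} (hM : M ∈ spinSquareSubring L)
    (hN : N ∈ spinSquareSubring L) : Commute M N := by
  have : IsMulCommutative (spinSquareSubring L) := by
    refine Subring.isMulCommutative_closure ?_
    rintro _ (⟨i, rfl⟩ | ⟨i, rfl⟩) _ (⟨j, rfl⟩ | ⟨j, rfl⟩)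
    · exact commute_site_site (Commute.refl _) i j
    · exact commute_site_site commute_Sx_sq_Sz_sq i j
    · exact commute_site_site commute_Sx_sq_Sz_sq.symm i j
    · exact commute_site_site (Commute.refl _) i j
  exact setLike_mul_comm hM hN

theorem site_Sx_sq_mem (k : Fin L) : site Sx k ^ 2 ∈ spinSquareSubring L :=
  site_pow Sx 2 k ▸ Subring.subset_closure (Or.inl ⟨k, rfl⟩)

theorem site_Sz_sq_mem (k : Fin L) : site Sz k ^ 2 ∈ spinSquareSubring L :=
  site_pow Sz 2 k ▸ Subring.subset_closure (Or.inr ⟨k, rfl⟩)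

theorem ktFactor_eq_piRotation {u v : Fin L} (huv : u ≠ v) :
    ktFactor u v = piRotation (site Sz u * site Sx v) :=
  exp_pi_mul_I_smul_of_pow_three_eq_self (site_mul_site_pow_three Sz_pow_three Sx_pow_three huv)

theorem ktFactor_mem {u v : Fin L} (huv : u ≠ v) : ktFactor u v ∈ spinSquareSubring L := by
  rw [ktFactor_eq_piRotation huv]
  refine piRotation_mem ?_
  rw [(commute_site_site_of_ne Sz Sx huv).mul_pow]
  exact mul_mem (site_Sz_sq_mem u) (site_Sx_sq_mem v)

theorem ktFactor_mul_self {u v : Fin L} (huv : u ≠ v) : ktFactor u v * ktFactor u v = 1 := by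
  rw [ktFactor_eq_piRotation huv,
    piRotation_mul_self (site_mul_site_pow_three Sz_pow_three Sx_pow_three huv)]

theorem ite_lt_ktFactor_mem (u v : Fin L) :
    (if u < v then ktFactor u v else 1) ∈ spinSquareSubring L := by
  split_ifs with huv
  · exact ktFactor_mem huv.ne
  · exact one_mem _

theorem UKT_mem : UKT L ∈ spinSquareSubring L :=
  prod_map_mem _ fun u ↦ prod_map_mem _ fun v ↦ ite_lt_ktFactor_mem u v

theorem UKT_mul_self : UKT L * UKT L = 1 := by
  refine prod_map_mul_self_eq_one _ (fun u u' ↦ commute_of_mem_spinSquareSubring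
    (prod_map_mem _ (ite_lt_ktFactor_mem u)) (prod_map_mem _ (ite_lt_ktFactor_mem u'))) fun u ↦ ?_
  refine prod_map_mul_self_eq_one _ (fun v v' ↦ commute_of_mem_spinSquareSubring
    (ite_lt_ktFactor_mem u v) (ite_lt_ktFactor_mem u v')) fun v ↦ ?_
  split_ifs with huv
  · exact ktFactor_mul_self huv.ne
  · exact one_mul 1

theorem rotationString_mem {A : Matrix (Fin 3) (Fin 3) ℂ}
    (hA : ∀ k : Fin L, site A k ^ 2 ∈ spinSquareSubring L) (s : Finset (Fin L)) :
    rotationString A s ∈ spinSquareSubring L := by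
  rw [← prod_map_ite_site_piRotation]
  refine prod_map_mem _ fun k ↦ ?_
  split_ifs
  · exact site_piRotation A k ▸ piRotation_mem (hA k)
  · exact one_mem _

theorem semiconjBy_UKT {X : Op L} {g : Fin L → Fin L → Op L}
    (hg : ∀ u v, g u v ∈ spinSquareSubring L)
    (hX : ∀ u v, u < v → SemiconjBy (ktFactor u v) X (X * g u v)) :
    SemiconjBy (UKT L) X (X * ((List.finRange L).map fun u ↦
      ((List.finRange L).map fun v ↦ if u < v then g u v else 1).prod).prod) := by
  have hg' (u v : Fin L) : (if u < v then g u v else 1) ∈ spinSquareSubring L := by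
    split_ifs
    · exact hg u v
    · exact one_mem _
  refine semiconjBy_prod_map _ (fun u u' ↦ commute_of_mem_spinSquareSubring
    (prod_map_mem _ (ite_lt_ktFactor_mem u)) (prod_map_mem _ (hg' u'))) fun u ↦ ?_
  refine semiconjBy_prod_map _ (fun v v' ↦ commute_of_mem_spinSquareSubring
    (ite_lt_ktFactor_mem u v) (hg' u v')) fun v ↦ ?_
  split_ifs with huv
  · exact hX u v huv
  · simp

theorem semiconjBy_ktFactor_site_Sx {u v : Fin L} (huv : u ≠ v) (j : Fin L) :
    SemiconjBy (ktFactor u v) (site Sx j)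
      (site Sx j * if u = j then piRotation (site Sx v) else 1) := by
  rw [ktFactor_eq_piRotation huv]
  have hv : Commute (site Sx v) (site Sx j) := commute_site_site (Commute.refl Sx) v j
  split_ifs with hu
  · subst hu
    refine semiconjBy_piRotation_mul (commute_site_site_of_ne Sz Sx huv) ?_ hv ?_
    · rw [← site_pow, Sx_pow_three]
    · simpa only [map_add, map_mul, map_pow] using!
        congrArg (siteHom u) Sz_sq_mul_Sx_add_Sx_mul_Sz_sq
  · rw [mul_one]
    exact commute_piRotation_left (((commute_site_site_of_ne Sz Sx hu).mul_left hv).pow_left 2)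

theorem semiconjBy_ktFactor_site_Sz {u v : Fin L} (huv : u ≠ v) (j : Fin L) :
    SemiconjBy (ktFactor u v) (site Sz j)
      (site Sz j * if v = j then piRotation (site Sz u) else 1) := by
  rw [ktFactor_eq_piRotation huv]
  have hu : Commute (site Sz u) (site Sz j) := commute_site_site (Commute.refl Sz) u j
  split_ifs with hv
  · subst hv
    rw [(commute_site_site_of_ne Sz Sx huv).eq]
    refine semiconjBy_piRotation_mul (commute_site_site_of_ne Sx Sz huv.symm) ?_ hu ?_
    · rw [← site_pow, Sz_pow_three]
    · simpa only [map_add, map_mul, map_pow] using!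
        congrArg (siteHom v) Sx_sq_mul_Sz_add_Sz_mul_Sx_sq
  · rw [mul_one]
    exact commute_piRotation_left ((hu.mul_left (commute_site_site_of_ne Sx Sz hv)).pow_left 2)

theorem semiconjBy_UKT_site_Sx (j : Fin L) :
    SemiconjBy (UKT L) (site Sx j) (site Sx j * rotationString Sx (Finset.Ioi j)) := by
  have hmem (u v : Fin L) :
      (if u = j then piRotation (site Sx v) else 1) ∈ spinSquareSubring L := by
    split_ifs
    · exact piRotation_mem (site_Sx_sq_mem v)
    · exact one_mem _
  have hprod : ((List.finRange L).map fun u ↦ ((List.finRange L).map fun v ↦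
      if u < v then if u = j then piRotation (site Sx v) else 1 else 1).prod).prod =
      rotationString Sx (Finset.Ioi j) := by
    rw [prod_map_finRange_eq_single j fun u hu ↦ by simp [hu], ← prod_map_ite_site_piRotation]
    simp only [Finset.mem_Ioi, site_piRotation, if_true]
  exact hprod ▸ semiconjBy_UKT hmem fun u v huv ↦ semiconjBy_ktFactor_site_Sx huv.ne j

theorem semiconjBy_UKT_site_Sz (j : Fin L) :
    SemiconjBy (UKT L) (site Sz j) (site Sz j * rotationString Sz (Finset.Iio j)) := by
  have hmem (u v : Fin L) :
      (if v = j then piRotation (site Sz u) else 1) ∈ spinSquareSubring L := by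
    split_ifs
    · exact piRotation_mem (site_Sz_sq_mem u)
    · exact one_mem _
  have hprod : ((List.finRange L).map fun u ↦ ((List.finRange L).map fun v ↦
      if u < v then if v = j then piRotation (site Sz u) else 1 else 1).prod).prod =
      rotationString Sz (Finset.Iio j) := by
    rw [← prod_map_ite_site_piRotation]
    refine congrArg List.prod (List.map_congr_left fun u _ ↦ ?_)
    rw [prod_map_finRange_eq_single j fun v hv ↦ by simp [hv]]
    simp only [Finset.mem_Iio, site_piRotation, if_true]
  exact hprod ▸ semiconjBy_UKT hmem fun u v huv ↦ semiconjBy_ktFactor_site_Sz huv.ne j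

theorem semiconjBy_UKT_neg_string {A : Matrix (Fin 3) (Fin 3) ℂ} (hA : A = Sx ∨ A = Sz)
    {j k : Fin L} (hjk : j < k) :
    SemiconjBy (UKT L) (-(site A j * rotationString A (Finset.Ioo j k) * site A k))
      (site A j * site A k) := by
  rcases hA with rfl | rfl
  · exact semiconjBy_neg_site_mul_rotationString_mul_site Sx_pow_three (Or.inr rfl)
      (Ioi_symmDiff_Ioo_symmDiff_Ioi hjk) (semiconjBy_UKT_site_Sx j)
      (commute_of_mem_spinSquareSubring UKT_mem (rotationString_mem site_Sx_sq_mem _))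
      (semiconjBy_UKT_site_Sx k)
  · exact semiconjBy_neg_site_mul_rotationString_mul_site Sz_pow_three (Or.inl rfl)
      (Iio_symmDiff_Ioo_symmDiff_Iio hjk) (semiconjBy_UKT_site_Sz j)
      (commute_of_mem_spinSquareSubring UKT_mem (rotationString_mem site_Sz_sq_mem _))
      (semiconjBy_UKT_site_Sz k)

end KennedyTasaki

/-- For `α ∈ {x,z}`, the Kennedy–Tasaki transformation maps the string-order
operator `−S^α_j exp(iπ Σ_{k=j+1}^{j+r−1} S^α_k) S^α_{j+r}` to the ferromagnetic two-point
operator `S^α_j S^α_{j+r}`. -/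
theorem UKT_string_order (L : ℕ) (hL : 2 ≤ L) (A : Matrix (Fin 3) (Fin 3) ℂ)
    (hA : A = Sx ∨ A = Sz) (j r : ℕ) (hr : 0 < r) (hjr : j + r < L) :
    UKT L *
        (-(site A ⟨j, by omega⟩ *
            NormedSpace.exp (((Real.pi : ℂ) * I) •
              ∑ k : Fin L, if j < (k : ℕ) ∧ (k : ℕ) < j + r then site A k else 0) *
            site A ⟨j + r, hjr⟩)) *
        UKT L =
      site A ⟨j, by omega⟩ * site A ⟨j + r, hjr⟩ := by
  have hcube : A ^ 3 = A := by
    rcases hA with rfl | rfl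
    · exact Sx_pow_three
    · exact Sz_pow_three
  have hstring : NormedSpace.exp (((Real.pi : ℂ) * I) •
      ∑ k : Fin L, if j < (k : ℕ) ∧ (k : ℕ) < j + r then site A k else 0) =
      rotationString A (Finset.Ioo ⟨j, by omega⟩ ⟨j + r, hjr⟩) := by
    rw [← exp_sum_site hcube, ← Finset.sum_filter]
    congr 3
    ext k
    simp [Fin.lt_def]
  have hlt : (⟨j, by omega⟩ : Fin L) < ⟨j + r, hjr⟩ := Nat.lt_add_of_pos_right hr
  rw [hstring, (semiconjBy_UKT_neg_string hA hlt).eq, mul_assoc, UKT_mul_self, mul_one]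

end
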